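/- Petersdorf's theorem: For every signature σ of the complete graph K_n, the frustration index satisfies l(K_n, σ) ≤ ⌊(n−1)²/4⌋, with equality for the all-negative signature: l(−K_n) = ⌊(n−1)²/4⌋. Moreover, if (K_n, σ) is not antibalanced, then l(K_n, σ) < l(−K_n). -/

import Mathlib

/-- The sign of a walk in a signed graph: the product of the signs of its edges. -/
def walkSign {V : Type*} (G : SimpleGraph V) (σ : Sym2 V → ℤˣ) {u v : V}
    (w : G.Walk u v) : ℤˣ :=
  (w.edges.map σ).prod

/-- A signed graph is balanced if every circle (cycle) is positive. -/
def sgBalanced {V : Type*} (G : SimpleGraph V) (σ : Sym2 V → ℤˣ) : Prop :=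
  ∀ ⦃v : V⦄ (w : G.Walk v v), w.IsCycle → walkSign G σ w = 1

/-- A signed graph is antibalanced if its negative (negating every sign) is balanced. -/
def sgAntibalanced {V : Type*} (G : SimpleGraph V) (σ : Sym2 V → ℤˣ) : Prop :=
  sgBalanced G (fun e => -σ e)

/-- The frustration index `l(Σ)`: the minimum number of edges whose deletion leaves a
balanced signed graph. -/
noncomputable def frustIndex {V : Type*} (G : SimpleGraph V) (σ : Sym2 V → ℤˣ) : ℕ :=
  sInf {k | ∃ F : Finset (Sym2 V), ↑F ⊆ G.edgeSet ∧ F.card = k ∧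
    sgBalanced (G.deleteEdges ↑F) σ}

/-!
Build a switching function one vertex at a time: of the two possible values at a new vertex, one
frustrates at most half of the edges to the vertices already treated. The upper bound is
`⌊0/2⌋ + ⌊1/2⌋ + ⋯ + ⌊(n-1)/2⌋ = ⌊(n-1)²/4⌋`. A signature all of whose triangles in the complete
graph are negative is antibalanced, so otherwise there is a positive triangle, which can be left
unfrustrated; starting from it saves one edge. Conversely, a balanced all-negative graph has no
triangle, hence at most `⌊n²/4⌋` edges by Mantel's theorem, and
`n.choose 2 = ⌊n²/4⌋ + ⌊(n-1)²/4⌋`.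
-/

section Arithmetic

theorem sq_div_four_eq_pred_sq_div_four_add (n : ℕ) :
    n ^ 2 / 4 = (n - 1) ^ 2 / 4 + n / 2 := by
  rcases n with _ | n
  · rfl
  rw [Nat.add_sub_cancel]
  rcases Nat.even_or_odd' n with ⟨k, rfl | rfl⟩
  · have hodd : (2 * k + 1) ^ 2 = 4 * (k ^ 2 + k) + 1 := by ring
    have heven : (2 * k) ^ 2 = 4 * k ^ 2 := by ring
    rw [hodd, heven]
    lia
  · have heven : (2 * k + 1 + 1) ^ 2 = 4 * (k ^ 2 + 2 * k + 1) := by ring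
    have hodd : (2 * k + 1) ^ 2 = 4 * (k ^ 2 + k) + 1 := by ring
    rw [heven, hodd]
    lia

theorem choose_two_eq_sq_div_four_add (n : ℕ) :
    n.choose 2 = n ^ 2 / 4 + (n - 1) ^ 2 / 4 := by
  induction n with
  | zero => rfl
  | succ n ih =>
    have h := sq_div_four_eq_pred_sq_div_four_add n
    have h' := sq_div_four_eq_pred_sq_div_four_add (n + 1)
    rw [Nat.choose_succ_succ' n 1, Nat.choose_one_right]
    rw [Nat.add_sub_cancel] at h' ⊢
    lia

end Arithmetic

open Finset in
theorem exists_card_filter_ne_le_half {α : Type*} (A : Finset α) (f : α → ℤˣ) :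
    ∃ ε : ℤˣ, #{a ∈ A | f a ≠ ε} ≤ #A / 2 := by
  have hcard : #{a ∈ A | f a ≠ 1} + #{a ∈ A | f a ≠ -1} = #A := by
    have hneg (a : α) : f a ≠ -1 ↔ ¬ f a ≠ 1 := by
      rw [Int.units_ne_iff_eq_neg, neg_neg, not_not]
    simp only [hneg]
    exact card_filter_add_card_filter_not _
  by_cases h : #{a ∈ A | f a ≠ 1} ≤ #A / 2
  · exact ⟨1, h⟩
  · exact ⟨-1, by lia⟩

section Balance

variable {V : Type*} {G : SimpleGraph V} {σ : Sym2 V → ℤˣ}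

theorem walkSign_eq_mul_of_forall_adj {s : V → ℤˣ}
    (h : ∀ u v, G.Adj u v → σ s(u, v) = s u * s v) {u v : V} (w : G.Walk u v) :
    walkSign G σ w = s u * s v := by
  induction w with
  | nil => simp [walkSign]
  | @cons u v x huv p ih =>
    calc walkSign G σ (.cons huv p) = σ s(u, v) * walkSign G σ p := by simp [walkSign]
      _ = s u * (s v * s v) * s x := by rw [h u v huv, ih]; simp only [mul_assoc]
      _ = s u * s x := by rw [Int.units_mul_self, mul_one]

theorem sgBalanced_of_forall_adj {s : V → ℤˣ}
    (h : ∀ u v, G.Adj u v → σ s(u, v) = s u * s v) : sgBalanced G σ := fun v w _ => by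
  rw [walkSign_eq_mul_of_forall_adj h, Int.units_mul_self]

theorem walkSign_neg_one {u v : V} (w : G.Walk u v) :
    walkSign G (fun _ => -1) w = (-1) ^ w.length := by
  simp [walkSign]

theorem sgBalanced.cliqueFree_three (h : sgBalanced G fun _ => -1) : G.CliqueFree 3 := by
  intro t ht
  obtain ⟨v, w, hw, hlen⟩ := SimpleGraph.is3Clique_iff_exists_cycle_length_three.mp ⟨t, ht⟩
  have hsign := h w hw
  rw [walkSign_neg_one, hlen] at hsign
  exact absurd hsign (by decide)

end Balance

section StarSwitching

variable {V : Type*} {G : SimpleGraph V} {σ : Sym2 V → ℤˣ} {a u v : V}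

/-- The switching function of the star at `a`: equal to `1` at `a`, it leaves every edge at `a`
unfrustrated. -/
def starSwitching [DecidableEq V] (σ : Sym2 V → ℤˣ) (a : V) : V → ℤˣ :=
  Function.update (fun v => σ s(a, v)) a 1

theorem sign_eq_starSwitching_mul [DecidableEq V] (huv : u ≠ v)
    (h : a ≠ u → v ≠ a → σ s(a, u) * σ s(u, v) * σ s(v, a) = 1) :
    σ s(u, v) = starSwitching σ a u * starSwitching σ a v := by
  rcases eq_or_ne u a with rfl | hu
  · simp [starSwitching, huv.symm]
  rcases eq_or_ne v a with rfl | hv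
  · simp [starSwitching, hu, Sym2.eq_swap]
  have htri := h hu.symm hv
  rw [Sym2.eq_swap (a := v), mul_right_comm, mul_eq_one_iff_eq_inv', Int.units_inv_eq_self] at htri
  simp [starSwitching, hu, hv, htri]

theorem sgBalanced_of_forall_triangle
    (h : ∀ a b c, a ≠ b → b ≠ c → c ≠ a → σ s(a, b) * σ s(b, c) * σ s(c, a) = 1) :
    sgBalanced G σ := by
  classical
  intro a w hw
  have hstar (u v : V) (huv : G.Adj u v) :
      σ s(u, v) = starSwitching σ a u * starSwitching σ a v :=
    sign_eq_starSwitching_mul huv.ne fun hu hv => h a u v hu huv.ne hv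
  exact sgBalanced_of_forall_adj hstar w hw

theorem exists_positive_triangle_of_not_sgAntibalanced (h : ¬ sgAntibalanced G σ) :
    ∃ a b c, a ≠ b ∧ b ≠ c ∧ c ≠ a ∧ σ s(a, b) * σ s(b, c) * σ s(c, a) = 1 := by
  contrapose! h
  refine sgBalanced_of_forall_triangle fun a b c hab hbc hca => ?_
  rw [neg_mul_neg, mul_neg, neg_eq_iff_eq_neg]
  exact Int.units_ne_iff_eq_neg.mp (h a b c hab hbc hca)

end StarSwitching

section Frustration

open Finset

variable {V : Type*} {G : SimpleGraph V} {σ : Sym2 V → ℤˣ}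

open Classical in
/-- The edges of `(G, σ)` inside `S` that are frustrated by the switching function `s`, that is,
become negative after switching by `s`. -/
noncomputable def frustratedEdges (G : SimpleGraph V) (σ : Sym2 V → ℤˣ) (s : V → ℤˣ)
    (S : Finset V) : Finset (Sym2 V) :=
  S.sym2.filter fun e => e ∈ G.edgeSet ∧ σ e ≠ (e.map s).mul

theorem mk_mem_frustratedEdges {s : V → ℤˣ} {S : Finset V} {u v : V} :
    s(u, v) ∈ frustratedEdges G σ s S ↔
      (u ∈ S ∧ v ∈ S) ∧ G.Adj u v ∧ σ s(u, v) ≠ s u * s v := by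
  classical
  simp [frustratedEdges]

theorem coe_frustratedEdges_subset_edgeSet (s : V → ℤˣ) (S : Finset V) :
    (frustratedEdges G σ s S : Set (Sym2 V)) ⊆ G.edgeSet := by
  classical
  intro e he
  rw [mem_coe, frustratedEdges, mem_filter] at he
  exact he.2.1

theorem frustratedEdges_triangle_eq_empty [DecidableEq V] {a b c : V}
    (h : σ s(a, b) * σ s(b, c) * σ s(c, a) = 1) :
    frustratedEdges G σ (starSwitching σ a) {a, b, c} = ∅ := by
  refine eq_empty_of_forall_notMem (Sym2.ind fun u v huv => ?_)
  obtain ⟨⟨hu, hv⟩, hadj, hne⟩ := mk_mem_frustratedEdges.mp huv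
  refine hne (sign_eq_starSwitching_mul hadj.ne fun hau hva => ?_)
  simp only [mem_insert, mem_singleton, hau.symm, hva, false_or] at hu hv
  rcases hu with rfl | rfl <;> rcases hv with rfl | rfl
  · exact absurd rfl hadj.ne
  · exact h
  · rwa [mul_comm, mul_comm (σ s(a, u)), ← mul_assoc, Sym2.eq_swap (a := v) (b := a),
      Sym2.eq_swap (a := u) (b := v), Sym2.eq_swap (a := a) (b := u)]
  · exact absurd rfl hadj.ne

theorem frustratedEdges_update_insert_subset [DecidableEq V] [DecidableRel G.Adj]
    (s : V → ℤˣ) (S : Finset V) (v : V) (ε : ℤˣ) :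
    frustratedEdges G σ (Function.update s v ε) (insert v S) ⊆
      {u ∈ S | G.Adj v u ∧ σ s(v, u) * s u ≠ ε}.image (s(v, ·)) ∪ frustratedEdges G σ s S := by
  have hstar {u : V} (hu : u ∈ insert v S) (hadj : G.Adj v u)
      (hne : σ s(v, u) ≠ Function.update s v ε v * Function.update s v ε u) :
      u ∈ S ∧ G.Adj v u ∧ σ s(v, u) * s u ≠ ε := by
    rw [Function.update_self, Function.update_of_ne hadj.ne'] at hne
    refine ⟨mem_of_mem_insert_of_ne hu hadj.ne', hadj, fun h => hne ?_⟩
    rw [← h, mul_assoc, Int.units_mul_self, mul_one]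
  refine Sym2.ind fun u w huw => ?_
  obtain ⟨⟨hu, hw⟩, hadj, hne⟩ := mk_mem_frustratedEdges.mp huw
  rcases eq_or_ne u v with rfl | huv
  · exact mem_union_left _ (mem_image_of_mem _ (mem_filter.mpr (hstar hw hadj hne)))
  rcases eq_or_ne w v with rfl | hwv
  · rw [Sym2.eq_swap, mul_comm] at hne
    rw [Sym2.eq_swap]
    exact mem_union_left _ (mem_image_of_mem _ (mem_filter.mpr (hstar hu hadj.symm hne)))
  rw [Function.update_of_ne huv, Function.update_of_ne hwv] at hne
  exact mem_union_right _ (mk_mem_frustratedEdges.mpr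
    ⟨⟨mem_of_mem_insert_of_ne hu huv, mem_of_mem_insert_of_ne hw hwv⟩, hadj, hne⟩)

theorem exists_card_frustratedEdges_insert_le [DecidableEq V] (G : SimpleGraph V)
    [DecidableRel G.Adj] (σ : Sym2 V → ℤˣ) (s : V → ℤˣ) (S : Finset V) (v : V) :
    ∃ t : V → ℤˣ, #(frustratedEdges G σ t (insert v S)) ≤
      #(frustratedEdges G σ s S) + #{u ∈ S | G.Adj v u} / 2 := by
  obtain ⟨ε, hε⟩ :=
    exists_card_filter_ne_le_half {u ∈ S | G.Adj v u} fun u => σ s(v, u) * s u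
  rw [filter_filter] at hε
  refine ⟨Function.update s v ε, ?_⟩
  calc #(frustratedEdges G σ (Function.update s v ε) (insert v S))
      ≤ _ := card_le_card (frustratedEdges_update_insert_subset s S v ε)
    _ ≤ #({u ∈ S | G.Adj v u ∧ σ s(v, u) * s u ≠ ε}.image (s(v, ·))) +
          #(frustratedEdges G σ s S) := card_union_le _ _
    _ ≤ #{u ∈ S | G.Adj v u} / 2 + #(frustratedEdges G σ s S) := by
      gcongr; exact card_image_le.trans hε
    _ = _ := add_comm _ _

theorem exists_card_frustratedEdges_union_le [DecidableEq V] (G : SimpleGraph V)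
    (σ : Sym2 V → ℤˣ) (s : V → ℤˣ) (S T : Finset V) :
    ∃ t : V → ℤˣ, #(frustratedEdges G σ t (T ∪ S)) + (#S - 1) ^ 2 / 4 ≤
      #(frustratedEdges G σ s S) + (#(T ∪ S) - 1) ^ 2 / 4 := by
  classical
  induction T using Finset.induction_on with
  | empty => exact ⟨s, by rw [empty_union]⟩
  | insert v T _ ih =>
    obtain ⟨t, ht⟩ := ih
    rw [insert_union]
    by_cases hv : v ∈ T ∪ S
    · exact ⟨t, by rwa [insert_eq_of_mem hv]⟩
    obtain ⟨t', ht'⟩ := exists_card_frustratedEdges_insert_le G σ t (T ∪ S) v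
    have hnbr : #{u ∈ T ∪ S | G.Adj v u} ≤ #(T ∪ S) := card_filter_le _ _
    have hsq := sq_div_four_eq_pred_sq_div_four_add #(T ∪ S)
    refine ⟨t', ?_⟩
    rw [card_insert_of_notMem hv, Nat.add_sub_cancel]
    lia

end Frustration

open Finset in
theorem card_edgeFinset_le_sq_div_four_of_cliqueFree_three {V : Type*} [Fintype V]
    {G : SimpleGraph V} [DecidableRel G.Adj] (h : G.CliqueFree 3) :
    #G.edgeFinset ≤ Fintype.card V ^ 2 / 4 := by
  have hturan := h.card_edgeFinset_le
  have hchoose : (Fintype.card V % 2).choose 2 = 0 :=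
    Nat.choose_eq_zero_of_lt (Nat.mod_lt _ two_pos)
  simp only [hchoose, add_zero, Nat.add_one_sub_one, mul_one, Nat.reduceMul] at hturan
  exact hturan.trans (Nat.div_le_div_right (Nat.sub_le _ _))

section FrustrationIndex

open Finset

variable {V : Type*} [Fintype V] (G : SimpleGraph V) (σ : Sym2 V → ℤˣ)

theorem sgBalanced_deleteEdges_frustratedEdges_univ (s : V → ℤˣ) :
    sgBalanced (G.deleteEdges (frustratedEdges G σ s univ)) σ := by
  refine sgBalanced_of_forall_adj (s := s) fun u v huv => ?_
  rw [SimpleGraph.deleteEdges_adj, mem_coe, mk_mem_frustratedEdges] at huv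
  by_contra hne
  exact huv.2 ⟨⟨mem_univ u, mem_univ v⟩, huv.1, hne⟩

theorem frustIndex_le_card_frustratedEdges_univ (s : V → ℤˣ) :
    frustIndex G σ ≤ #(frustratedEdges G σ s univ) :=
  Nat.sInf_le ⟨_, coe_frustratedEdges_subset_edgeSet s univ, rfl,
    sgBalanced_deleteEdges_frustratedEdges_univ G σ s⟩

theorem exists_card_eq_frustIndex {V : Type*} [Finite V] (G : SimpleGraph V) (σ : Sym2 V → ℤˣ) :
    ∃ F : Finset (Sym2 V), ↑F ⊆ G.edgeSet ∧ #F = frustIndex G σ ∧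
      sgBalanced (G.deleteEdges ↑F) σ := by
  have := Fintype.ofFinite V
  exact Nat.sInf_mem (s := {k | ∃ F : Finset (Sym2 V), (F : Set (Sym2 V)) ⊆ G.edgeSet ∧
    #F = k ∧ sgBalanced (G.deleteEdges ↑F) σ}) ⟨_, _, coe_frustratedEdges_subset_edgeSet 1 univ,
    rfl, sgBalanced_deleteEdges_frustratedEdges_univ G σ 1⟩

theorem frustIndex_add_le_card_frustratedEdges_add (s : V → ℤˣ) (S : Finset V) :
    frustIndex G σ + (#S - 1) ^ 2 / 4 ≤
      #(frustratedEdges G σ s S) + (Fintype.card V - 1) ^ 2 / 4 := by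
  classical
  obtain ⟨t, ht⟩ := exists_card_frustratedEdges_union_le G σ s S univ
  rw [union_eq_left.mpr (subset_univ S), card_univ] at ht
  exact (Nat.add_le_add_right (frustIndex_le_card_frustratedEdges_univ G σ t) _).trans ht

theorem frustIndex_le_sq_div_four : frustIndex G σ ≤ (Fintype.card V - 1) ^ 2 / 4 := by
  simpa [frustratedEdges] using frustIndex_add_le_card_frustratedEdges_add G σ 1 ∅

variable {G σ} in
theorem frustIndex_lt_sq_div_four_of_not_sgAntibalanced (h : ¬ sgAntibalanced G σ) :
    frustIndex G σ < (Fintype.card V - 1) ^ 2 / 4 := by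
  classical
  obtain ⟨a, b, c, hab, hbc, hca, htri⟩ := exists_positive_triangle_of_not_sgAntibalanced h
  have hle := frustIndex_add_le_card_frustratedEdges_add G σ (starSwitching σ a) {a, b, c}
  rw [frustratedEdges_triangle_eq_empty htri, card_empty, zero_add,
    card_eq_three.mpr ⟨a, b, c, hab, hca.symm, hbc, rfl⟩] at hle
  exact hle

theorem card_edgeFinset_le_frustIndex_neg_one_add [Fintype G.edgeSet] :
    #G.edgeFinset ≤ frustIndex G (fun _ => -1) + Fintype.card V ^ 2 / 4 := by
  classical
  obtain ⟨F, -, hF, hbal⟩ := exists_card_eq_frustIndex G fun _ => -1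
  calc #G.edgeFinset ≤ #F + #(G.edgeFinset \ F) := by
        rw [add_comm]; exact card_le_card_sdiff_add_card
    _ = frustIndex G (fun _ => -1) + #(G.deleteEdges ↑F).edgeFinset := by
        rw [hF, SimpleGraph.edgeFinset_deleteEdges]
    _ ≤ frustIndex G (fun _ => -1) + Fintype.card V ^ 2 / 4 := by
        gcongr; exact card_edgeFinset_le_sq_div_four_of_cliqueFree_three hbal.cliqueFree_three

theorem frustIndex_top_neg_one :
    frustIndex (⊤ : SimpleGraph V) (fun _ => -1) = (Fintype.card V - 1) ^ 2 / 4 := by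
  classical
  refine le_antisymm (frustIndex_le_sq_div_four _ _) ?_
  have h := card_edgeFinset_le_frustIndex_neg_one_add (⊤ : SimpleGraph V)
  rw [SimpleGraph.card_edgeFinset_top_eq_card_choose_two, choose_two_eq_sq_div_four_add] at h
  lia

end FrustrationIndex

theorem petersdorf_general {V : Type*} [Fintype V] (G : SimpleGraph V) (σ : Sym2 V → ℤˣ) :
    frustIndex G σ ≤ (Fintype.card V - 1) ^ 2 / 4 ∧
    frustIndex (⊤ : SimpleGraph V) (fun _ => -1) = (Fintype.card V - 1) ^ 2 / 4 ∧
    (¬ sgAntibalanced G σ → frustIndex G σ < (Fintype.card V - 1) ^ 2 / 4) :=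
  ⟨frustIndex_le_sq_div_four G σ, frustIndex_top_neg_one,
    frustIndex_lt_sq_div_four_of_not_sgAntibalanced⟩

/-- Petersdorf's theorem: for every signature `σ` of `K_n`,
`l(K_n, σ) ≤ ⌊(n-1)²/4⌋`, with equality for the all-negative signature; moreover if
`(K_n, σ)` is not antibalanced then `l(K_n, σ) < l(-K_n)`. -/
theorem petersdorf (n : ℕ) (σ : Sym2 (Fin n) → ℤˣ) :
    frustIndex (⊤ : SimpleGraph (Fin n)) σ ≤ (n - 1) ^ 2 / 4 ∧
    frustIndex (⊤ : SimpleGraph (Fin n)) (fun _ => -1) = (n - 1) ^ 2 / 4 ∧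
    (¬ sgAntibalanced (⊤ : SimpleGraph (Fin n)) σ →
      frustIndex (⊤ : SimpleGraph (Fin n)) σ < (n - 1) ^ 2 / 4) := by
  simpa only [Fintype.card_fin] using petersdorf_general (⊤ : SimpleGraph (Fin n)) σ
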